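/- arXiv:2412.17033 — 5 statements merged into one kernel-verified Lean document; each statement's English description precedes it below -/
import Mathlib

section
/- For every integer N ≥ 5, one has g₁(N) > N²/(12π²) − 2. -/
/-!
The functions in the statement are Dirichlet convolutions of Euler's totient `φ`:
`u = φ * φ` and `s(N) N² = ∑_{d ∣ N} d φ(d) φ(N/d)` (compare the values on prime powers).
Hence `24 (g₁(N) - 1) = ∑_{d ∣ N} (d - 6) φ(d) φ(N/d)`, an integer that can be computed
directly; for `5 ≤ N < 250` the claim follows from this formula and `π > 3.14`.

For `N ≥ 250` two crude bounds are enough. First, `s(N) = ∏_{p ∣ N} (1 - 1/p²) ≥ 1/2`, by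
comparison with the telescoping product `∏_{2 ≤ k ≤ N} (1 - 1/k²) = (N + 1) / (2N)`.
Second, `27 u(N)² ≤ 16 N³` for `N > 1`: on prime powers the worst case is `p = 3`, `n = 1`,
through `4p³ - 27(p - 1)² = (p - 3)² (4p - 3)`, and since `16/27 < 1` the bound is preserved
under coprime products. So `u(N) = O(N^{3/2})` with an explicit constant, which is dominated
by `(1/48 - 1/(12π²)) N²` in this range.
-/

open Real

/-- Euler's totient as a real-valued arithmetic function. -/
noncomputable def totientAF : ArithmeticFunction ℝ := ⟨fun n => (n.totient : ℝ), by simp⟩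

/-- The arithmetic function `n ↦ n φ(n)`. -/
noncomputable def idTotientAF : ArithmeticFunction ℝ :=
  ⟨fun n => (n : ℝ) * (n.totient : ℝ), by simp⟩

lemma totientAF_isMultiplicative : totientAF.IsMultiplicative :=
  ⟨by simp [totientAF], fun {m n} h => by
    simp [totientAF, Nat.totient_mul h]⟩

lemma idTotientAF_isMultiplicative : idTotientAF.IsMultiplicative :=
  ⟨by simp [idTotientAF], fun {m n} h => by
    simp only [idTotientAF, ArithmeticFunction.coe_mk, Nat.totient_mul h]
    push_cast
    ring⟩

lemma eq_of_eq_on_prime_pow (f : ℕ → ℝ) (g : ArithmeticFunction ℝ) (hg : g.IsMultiplicative)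
    (f1 : f 1 = 1) (fmul : ∀ m n : ℕ, Nat.Coprime m n → f (m * n) = f m * f n)
    (h : ∀ p m : ℕ, p.Prime → f (p ^ (m + 1)) = g (p ^ (m + 1))) (N : ℕ) (hN : 0 < N) :
    f N = g N := by
  induction N using Nat.recOnPosPrimePosCoprime with
  | prime_pow p n hp hn =>
    obtain ⟨m, rfl⟩ : ∃ m, n = m + 1 := ⟨n - 1, by omega⟩
    exact h p m hp
  | zero => omega
  | one => rw [f1, hg.map_one]
  | coprime a b ha hb hab iha ihb =>
    rw [fmul a b hab, hg.map_mul_of_coprime hab, iha (by omega), ihb (by omega)]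

lemma conv_apply (f g : ArithmeticFunction ℝ) (N : ℕ) :
    (f * g) N = ∑ d ∈ N.divisors, f d * g (N / d) := by
  rw [ArithmeticFunction.mul_apply]
  exact Nat.sum_divisorsAntidiagonal (fun a b => f a * g b)

/-- On `p ^ (m + 1)`, a convolution with `φ` splits into the two extreme divisors and the
proper ones, for which both totients are of the form `p ^ i (p - 1)`. -/
lemma sum_totient_prime_pow (c : ℕ → ℝ) (p m : ℕ) (hp : p.Prime) :
    ∑ d ∈ (p ^ (m + 1)).divisors,
      c d * (d.totient : ℝ) * ((p ^ (m + 1) / d).totient : ℝ) =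
    c 1 * ((p : ℝ) ^ m * (p - 1)) + c (p ^ (m + 1)) * ((p : ℝ) ^ m * (p - 1)) +
      ∑ i ∈ Finset.range m, c (p ^ (i + 1)) * ((p : ℝ) ^ m * (p - 1) * (p - 1) / p) := by
  have hp0 : (p : ℝ) ≠ 0 := by exact_mod_cast hp.ne_zero
  have ht : ∀ i, ((p ^ (i + 1)).totient : ℝ) = (p : ℝ) ^ i * (p - 1) := fun i => by
    rw [Nat.totient_prime_pow_succ hp, Nat.cast_mul, Nat.cast_pow, Nat.cast_pred hp.pos]
  rw [Nat.sum_divisors_prime_pow hp, Finset.sum_range_succ, Finset.sum_range_succ']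
  have hmid : ∀ i ∈ Finset.range m,
      c (p ^ (i + 1)) * ((p ^ (i + 1)).totient : ℝ) *
        ((p ^ (m + 1) / p ^ (i + 1)).totient : ℝ) =
      c (p ^ (i + 1)) * ((p : ℝ) ^ m * (p - 1) * (p - 1) / p) := by
    intro i hi
    obtain ⟨j, rfl⟩ : ∃ j, m = i + j + 1 := ⟨m - i - 1, by
      have := Finset.mem_range.1 hi
      omega⟩
    rw [Nat.pow_div (by omega) hp.pos, show i + j + 1 + 1 - (i + 1) = j + 1 by omega, ht, ht]
    field_simp
    ring
  rw [Finset.sum_congr rfl hmid, pow_zero, Nat.div_one, Nat.div_self (pow_pos hp.pos _), ht,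
    Nat.totient_one, Nat.cast_one]
  ring

lemma u_eq_sum (u : ℕ → ℝ) (hu1 : u 1 = 1)
    (humul : ∀ m n : ℕ, Nat.Coprime m n → u (m * n) = u m * u n)
    (hup : ∀ p m : ℕ, p.Prime →
      u (p ^ (m + 1)) = (p : ℝ) ^ m / p * (p - 1) * ((m + 2) * p - m))
    (N : ℕ) (hN : 0 < N) :
    u N = ∑ d ∈ N.divisors, (d.totient : ℝ) * ((N / d).totient : ℝ) := by
  rw [eq_of_eq_on_prime_pow u (totientAF * totientAF)
    (totientAF_isMultiplicative.mul totientAF_isMultiplicative) hu1 humul ?_ N hN, conv_apply]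
  · rfl
  · intro p m hp
    have hp0 : (p : ℝ) ≠ 0 := by exact_mod_cast hp.ne_zero
    have := sum_totient_prime_pow (fun _ => 1) p m hp
    simp only [one_mul, Finset.sum_const, Finset.card_range, nsmul_eq_mul] at this
    rw [hup p m hp, conv_apply]
    refine Eq.trans ?_ this.symm
    field_simp
    ring

lemma s_eq_sum (s : ℕ → ℝ) (hs1 : s 1 = 1)
    (hsmul : ∀ m n : ℕ, Nat.Coprime m n → s (m * n) = s m * s n)
    (hsp : ∀ p m : ℕ, p.Prime → s (p ^ (m + 1)) = 1 - 1 / (p : ℝ) ^ 2)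
    (N : ℕ) (hN : 0 < N) :
    s N * (N : ℝ) ^ 2 =
      ∑ d ∈ N.divisors, (d : ℝ) * (d.totient : ℝ) * ((N / d).totient : ℝ) := by
  rw [eq_of_eq_on_prime_pow (fun n => s n * (n : ℝ) ^ 2) (idTotientAF * totientAF)
    (idTotientAF_isMultiplicative.mul totientAF_isMultiplicative) (by simp [hs1]) ?_ ?_ N hN,
    conv_apply]
  · rfl
  · intro m n h
    simp only [hsmul m n h, Nat.cast_mul]
    ring
  · intro p m hp
    have hp0 : (p : ℝ) ≠ 0 := by exact_mod_cast hp.ne_zero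
    have hp1 : (p : ℝ) - 1 ≠ 0 := sub_ne_zero.2 (by exact_mod_cast hp.one_lt.ne')
    have hgeom : (∑ i ∈ Finset.range m, (p : ℝ) ^ (i + 1)) * (p - 1) = p * (p ^ m - 1) := by
      simp only [pow_succ, ← Finset.sum_mul]
      rw [← geom_sum_mul]
      ring
    have := sum_totient_prime_pow (fun n => (n : ℝ)) p m hp
    simp only [← Finset.sum_mul, Nat.cast_pow, Nat.cast_one] at this
    rw [conv_apply]
    refine Eq.trans ?_ this.symm
    rw [show (∑ i ∈ Finset.range m, (p : ℝ) ^ (i + 1)) * ((p : ℝ) ^ m * (p - 1) * (p - 1) / p) =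
      ((∑ i ∈ Finset.range m, (p : ℝ) ^ (i + 1)) * (p - 1)) * ((p : ℝ) ^ m * (p - 1) / p) by ring,
      hgeom]
    simp only [hsp p m hp, Nat.cast_pow]
    field_simp
    ring

/-- The rational form of the claim for small `N`: `205/1000` exceeds `2/π²`. -/
lemma small_table : ∀ N : ℕ, N < 250 → 5 ≤ N →
    205 * (N : ℤ) ^ 2 < 1000 *
      ((∑ d ∈ Nat.divisors N, ((d : ℤ) - 6) * ((Nat.totient d * Nat.totient (N / d) : ℕ) : ℤ)) + 72) := by
  decide +kernel

lemma s_eq_prod (s : ℕ → ℝ) (hs1 : s 1 = 1)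
    (hsmul : ∀ m n : ℕ, Nat.Coprime m n → s (m * n) = s m * s n)
    (hsp : ∀ p n : ℕ, p.Prime → 1 ≤ n → s (p ^ n) = 1 - 1 / (p : ℝ) ^ 2)
    (N : ℕ) (hN : 0 < N) :
    s N = ∏ p ∈ N.primeFactors, (1 - 1 / (p : ℝ) ^ 2) := by
  rw [Nat.multiplicative_factorization s (fun x y h => hsmul x y h) hs1 hN.ne', Finsupp.prod]
  refine Finset.prod_congr rfl fun p hp => ?_
  have hp' : p ∈ N.primeFactors := hp
  exact hsp p _ (Nat.prime_of_mem_primeFactors hp')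
    (Nat.one_le_iff_ne_zero.2 (Finsupp.mem_support_iff.1 hp))

lemma telescoping_prod (n : ℕ) :
    ∏ k ∈ Finset.Icc 2 (n + 1), (1 - 1 / (k : ℝ) ^ 2) = ((n : ℝ) + 2) / (2 * (n + 1)) := by
  induction n with
  | zero => simp
  | succ n ih =>
    rw [Finset.prod_Icc_succ_top (by omega), ih]
    push_cast
    field_simp
    ring

lemma half_le_s (s : ℕ → ℝ) (hs1 : s 1 = 1)
    (hsmul : ∀ m n : ℕ, Nat.Coprime m n → s (m * n) = s m * s n)
    (hsp : ∀ p n : ℕ, p.Prime → 1 ≤ n → s (p ^ n) = 1 - 1 / (p : ℝ) ^ 2)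
    (N : ℕ) (hN : 0 < N) : 1 / 2 ≤ s N := by
  rw [s_eq_prod s hs1 hsmul hsp N hN]
  obtain ⟨n, rfl⟩ : ∃ n, N = n + 1 := ⟨N - 1, by omega⟩
  have h1 : ((n : ℝ) + 2) / (2 * (n + 1)) ≤
      ∏ p ∈ (n + 1).primeFactors, (1 - 1 / (p : ℝ) ^ 2) := by
    rw [← telescoping_prod]
    refine Finset.prod_le_prod_of_subset_of_le_one ?_ ?_ ?_
    · intro p hp
      exact Finset.mem_Icc.2 ⟨(Nat.prime_of_mem_primeFactors hp).two_le,
        Nat.le_of_mem_primeFactors hp⟩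
    · intro k hk
      have : (1 : ℝ) ≤ k := by exact_mod_cast (by have := Finset.mem_Icc.1 hk; omega : 1 ≤ k)
      rw [sub_nonneg, div_le_one (by positivity)]
      exact one_le_pow₀ this
    · intro k _ _
      have : 0 ≤ 1 / (k : ℝ) ^ 2 := by positivity
      linarith
  refine le_trans ?_ h1
  rw [div_le_div_iff₀ (by norm_num) (by positivity)]
  linarith

/-- The bound `27 u² ≤ 16 N³` at `N = p ^ (m + 1)`, after cancelling a power of `p`.
Induction on `m`: passing from `m` to `m + 1` multiplies the last factor by at most `√p`. -/
lemma prime_pow_bound (p : ℝ) (hp : 2 ≤ p) (m : ℕ) :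
    27 * ((p - 1) * ((m + 2) * p - m)) ^ 2 ≤ 16 * p ^ (m + 5) := by
  induction m with
  | zero =>
    have h : 16 * p ^ 5 - 27 * ((p - 1) * (2 * p)) ^ 2 =
        4 * p ^ 2 * ((p - 3) ^ 2 * (4 * p - 3)) := by ring
    have : 0 ≤ 4 * p ^ 2 * ((p - 3) ^ 2 * (4 * p - 3)) :=
      mul_nonneg (by positivity) (mul_nonneg (sq_nonneg _) (by linarith))
    norm_num
    linarith
  | succ m ih =>
    set A : ℝ := (m + 2) * p - m with hA
    have hm : (0 : ℝ) ≤ m := Nat.cast_nonneg m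
    have hA2 : 2 * p ≤ A := by
      rw [hA]
      nlinarith
    -- `A + p - 1 ≤ (3 / 2 - 1 / (2p)) A`, and `(3 / 2 - 1 / (2p))² ≤ p` for `p ≥ 2`.
    have hstep : (A + p - 1) ^ 2 ≤ p * A ^ 2 := by
      obtain ⟨t, ht⟩ : ∃ t, A = 2 * p + t := ⟨A - 2 * p, by ring⟩
      obtain ⟨q, rfl⟩ : ∃ q, p = q + 2 := ⟨p - 2, by ring⟩
      have ht0 : 0 ≤ t := by linarith
      have hq0 : 0 ≤ q := by linarith
      rw [ht]
      have h : (q + 2) * (2 * (q + 2) + t) ^ 2 - (2 * (q + 2) + t + (q + 2) - 1) ^ 2 =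
        (4 * q ^ 3 + 15 * q ^ 2 + 18 * q + 7) + t * (4 * q ^ 2 + 10 * q + 6) +
          t ^ 2 * (q + 1) := by ring
      have : 0 ≤ (4 * q ^ 3 + 15 * q ^ 2 + 18 * q + 7) + t * (4 * q ^ 2 + 10 * q + 6) +
          t ^ 2 * (q + 1) := by positivity
      linarith
    have e : (((m + 1 : ℕ) : ℝ) + 2) * p - ((m + 1 : ℕ) : ℝ) = A + p - 1 := by
      rw [hA]
      push_cast
      ring
    rw [e]
    calc 27 * ((p - 1) * (A + p - 1)) ^ 2 = 27 * (p - 1) ^ 2 * (A + p - 1) ^ 2 := by ring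
      _ ≤ 27 * (p - 1) ^ 2 * (p * A ^ 2) := by gcongr
      _ = p * (27 * ((p - 1) * A) ^ 2) := by ring
      _ ≤ p * (16 * p ^ (m + 5)) := by gcongr
      _ = 16 * p ^ (m + 1 + 5) := by ring

lemma u_sq_le (u : ℕ → ℝ)
    (humul : ∀ m n : ℕ, Nat.Coprime m n → u (m * n) = u m * u n)
    (hup : ∀ p m : ℕ, p.Prime →
      u (p ^ (m + 1)) = (p : ℝ) ^ m / p * (p - 1) * ((m + 2) * p - m))
    (N : ℕ) (hN : 1 < N) : 27 * u N ^ 2 ≤ 16 * (N : ℝ) ^ 3 := by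
  induction N using Nat.recOnPosPrimePosCoprime with
  | prime_pow p n hp hn =>
    obtain ⟨m, rfl⟩ : ∃ m, n = m + 1 := ⟨n - 1, by omega⟩
    have hp2 : (2 : ℝ) ≤ p := by exact_mod_cast hp.two_le
    have hp0 : (p : ℝ) ≠ 0 := by exact_mod_cast hp.ne_zero
    rw [hup p m hp]
    calc 27 * ((p : ℝ) ^ m / p * (p - 1) * ((m + 2) * p - m)) ^ 2
        = ((p : ℝ) ^ m / p) ^ 2 * (27 * ((p - 1) * ((m + 2) * p - m)) ^ 2) := by ring
      _ ≤ ((p : ℝ) ^ m / p) ^ 2 * (16 * (p : ℝ) ^ (m + 5)) := by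
        exact mul_le_mul_of_nonneg_left (prime_pow_bound p hp2 m) (sq_nonneg _)
      _ = 16 * ((p ^ (m + 1) : ℕ) : ℝ) ^ 3 := by
        push_cast
        field_simp
        ring
  | zero => omega
  | one => omega
  | coprime a b ha hb hab iha ihb =>
    have h := mul_le_mul (iha ha) (ihb hb) (by positivity) (by positivity)
    have h0 : (0 : ℝ) ≤ (a : ℝ) ^ 3 * (b : ℝ) ^ 3 := by positivity
    rw [humul a b hab]
    push_cast
    rw [mul_pow, mul_pow]
    nlinarith

theorem genus_X1_lower_bound
    (s u : ℕ → ℝ)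
    (hs1 : s 1 = 1) (hu1 : u 1 = 1)
    (hsmul : ∀ m n : ℕ, Nat.Coprime m n → s (m * n) = s m * s n)
    (humul : ∀ m n : ℕ, Nat.Coprime m n → u (m * n) = u m * u n)
    (hsp : ∀ p n : ℕ, p.Prime → 1 ≤ n → s (p ^ n) = 1 - 1 / (p : ℝ) ^ 2)
    (hup : ∀ p n : ℕ, p.Prime → 1 ≤ n →
      u (p ^ n) = (p : ℝ) ^ ((n : ℤ) - 2) * ((p : ℝ) - 1) *
        (((n : ℝ) + 1) * (p : ℝ) - ((n : ℝ) - 1)))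
    (N : ℕ) (hN : 5 ≤ N) :
    (1 / 24) * s N * (N : ℝ) ^ 2 - (1 / 4) * u N + 1
      > (N : ℝ) ^ 2 / (12 * π ^ 2) - 2 := by
  have hup' : ∀ p m : ℕ, p.Prime →
      u (p ^ (m + 1)) = (p : ℝ) ^ m / p * (p - 1) * ((m + 2) * p - m) := by
    intro p m hp
    have hp0 : (p : ℝ) ≠ 0 := by exact_mod_cast hp.ne_zero
    rw [hup p (m + 1) hp (by omega),
      show (((m + 1 : ℕ) : ℤ) - 2) = (m : ℤ) - 1 by push_cast; ring,
      zpow_sub₀ hp0, zpow_natCast, zpow_one]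
    push_cast
    ring
  have hpi : (N : ℝ) ^ 2 / (12 * π ^ 2) ≤ (N : ℝ) ^ 2 / 118 := by
    have := Real.pi_gt_d2
    gcongr
    nlinarith
  rcases lt_or_ge N 250 with hlt | hge
  · have htab : 205 * (N : ℝ) ^ 2 < 1000 *
        ((∑ d ∈ N.divisors, ((d : ℝ) - 6) * ((d.totient : ℝ) * ((N / d).totient : ℝ))) + 72) := by
      exact_mod_cast small_table N hlt hN
    have hsum : ∑ d ∈ N.divisors, ((d : ℝ) - 6) * ((d.totient : ℝ) * ((N / d).totient : ℝ)) =
        s N * (N : ℝ) ^ 2 - 6 * u N := by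
      rw [s_eq_sum s hs1 hsmul (fun p m hp => hsp p (m + 1) hp (by omega)) N (by omega),
        u_eq_sum u hu1 humul hup' N (by omega), Finset.mul_sum, ← Finset.sum_sub_distrib]
      refine Finset.sum_congr rfl fun d _ => ?_
      ring
    rw [hsum] at htab
    have : 0 ≤ (N : ℝ) ^ 2 := by positivity
    linarith
  · have hs := half_le_s s hs1 hsmul hsp N (by omega)
    have hu := u_sq_le u humul hup' N (by omega)
    have hN' : (250 : ℝ) ≤ N := by exact_mod_cast hge
    have hN3 : 0 ≤ (N : ℝ) ^ 3 := by positivity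
    -- `0.0494 < 4 (1/48 - 1/118)`, and `0.0494² · 250 > 16/27`.
    have hu2 : u N ≤ 0.0494 * (N : ℝ) ^ 2 := by
      refine le_of_abs_le (abs_le_of_sq_le_sq ?_ (by positivity))
      nlinarith [mul_le_mul_of_nonneg_left hN' hN3]
    have : 1 / 2 * (N : ℝ) ^ 2 ≤ s N * (N : ℝ) ^ 2 := by gcongr
    have : 0 ≤ (N : ℝ) ^ 2 := by positivity
    linarith
end

section
/- For every integer N ≥ 26, one has t(N) = u(N)/(s(N)N²) ≤ 1/9; equivalently, 1 − 6u(N)/(s(N)N²) ≥ 1/3. -/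
/-!
Write `t N = u N / (s N * N ^ 2)`. This function is multiplicative, with
`t (p ^ n) = ((n + 1) p - (n - 1)) / ((p + 1) p ^ n)`, a formula that also holds for `n = 0`. These
values are positive and decrease in `n`, so `t` is antitone for divisibility on the positive
integers (`apply_mul_le`). It therefore suffices to find, for each `N ≥ 26`, a divisor `M` of `N`
with `t M ≤ 1 / 9`. A prime `p ≥ 17` is such an `M`, because `t p = 2 / (p + 1)`; when `N` has no
prime factor `≥ 17`, one of the finitely many numbers in `witnesses` divides `N`
(`exists_witness`). The bound is attained, for instance at `22` and `30`.
-/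

namespace TBound

/-- The multiplicative functions with the prime-power values of `t`; the exponent `0` is allowed,
where the formula gives `1`. -/
structure IsT (t : ℕ → ℝ) : Prop where
  map_mul : ∀ m n : ℕ, Nat.Coprime m n → t (m * n) = t m * t n
  map_pow : ∀ p n : ℕ, p.Prime →
    t (p ^ n) = (((n : ℝ) + 1) * p - ((n : ℝ) - 1)) / (((p : ℝ) + 1) * (p : ℝ) ^ n)

variable {t : ℕ → ℝ}

lemma IsT.map_one (h : IsT t) : t 1 = 1 := by
  have := h.map_pow 2 0 Nat.prime_two
  norm_num at this
  exact this

lemma IsT.map_prime (h : IsT t) {p : ℕ} (hp : p.Prime) : t p = 2 / ((p : ℝ) + 1) := by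
  have h1 := h.map_pow p 1 hp
  have : (p : ℝ) ≠ 0 := by exact_mod_cast hp.ne_zero
  have : (p : ℝ) + 1 ≠ 0 := by positivity
  rw [pow_one] at h1
  rw [h1]
  push_cast
  field_simp
  ring

lemma IsT.pow_nonneg (h : IsT t) {p : ℕ} (hp : p.Prime) (n : ℕ) : 0 ≤ t (p ^ n) := by
  have : (1 : ℝ) ≤ p := by exact_mod_cast hp.one_le
  rw [h.map_pow p n hp]
  apply div_nonneg _ (by positivity)
  nlinarith [mul_nonneg (Nat.cast_nonneg (α := ℝ) n) (sub_nonneg.2 this)]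

lemma IsT.pow_succ_le (h : IsT t) {p : ℕ} (hp : p.Prime) (n : ℕ) :
    t (p ^ (n + 1)) ≤ t (p ^ n) := by
  have h1 : (1 : ℝ) ≤ p := by exact_mod_cast hp.one_le
  rw [h.map_pow p n hp, h.map_pow p (n + 1) hp, pow_succ, ← mul_assoc,
    div_le_div_iff₀ (by positivity) (by positivity)]
  -- The difference of the numerators over the common denominator `(p + 1) p ^ (n + 1)` is
  -- `(p - 1) ((n + 1) p - n)`.
  have h2 : (0 : ℝ) ≤ ((p : ℝ) - 1) * ((n + 1) * p - n) := by
    apply mul_nonneg (by linarith)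
    nlinarith [mul_nonneg (Nat.cast_nonneg (α := ℝ) n) (sub_nonneg.2 h1)]
  have h3 : (0 : ℝ) ≤ ((p : ℝ) + 1) * (p : ℝ) ^ n := by positivity
  have h4 := mul_nonneg h3 h2
  push_cast
  linarith

lemma IsT.nonneg (h : IsT t) {n : ℕ} (hn : n ≠ 0) : 0 ≤ t n := by
  induction n using Nat.recOnPosPrimePosCoprime with
  | zero => exact absurd rfl hn
  | one => simp [h.map_one]
  | prime_pow p k hp _ => exact h.pow_nonneg hp k
  | coprime a b ha hb hab iha ihb =>
    rw [h.map_mul a b hab]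
    exact mul_nonneg (iha (by omega)) (ihb (by omega))

lemma IsT.prime_mul_le (h : IsT t) {p m : ℕ} (hp : p.Prime) (hm : m ≠ 0) :
    t (p * m) ≤ t m := by
  obtain ⟨k, r, hr, rfl⟩ := Nat.exists_eq_pow_mul_and_not_dvd hm p hp.ne_one
  have hc : p.Coprime r := (Nat.Prime.coprime_iff_not_dvd hp).2 hr
  have hr0 : r ≠ 0 := by rintro rfl; simp at hr
  rw [← mul_assoc, ← pow_succ', h.map_mul _ _ (hc.pow_left _), h.map_mul _ _ (hc.pow_left _)]
  exact mul_le_mul_of_nonneg_right (h.pow_succ_le hp k) (h.nonneg hr0)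

/-- `t` is antitone for divisibility on the positive integers. -/
lemma IsT.apply_mul_le (h : IsT t) {d m : ℕ} (hd : d ≠ 0) (hm : m ≠ 0) : t (d * m) ≤ t m := by
  induction d using induction_on_primes with
  | zero => exact absurd rfl hd
  | one => simp
  | prime_mul p a hp ih =>
    have ha : a ≠ 0 := right_ne_zero_of_mul hd
    rw [mul_assoc]
    exact (h.prime_mul_le hp (mul_ne_zero ha hm)).trans (ih ha)

lemma IsT.le_of_dvd (h : IsT t) {M N : ℕ} (hN : N ≠ 0) (hMN : M ∣ N) : t N ≤ t M := by
  obtain ⟨d, rfl⟩ := hMN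
  rw [mul_comm]
  exact h.apply_mul_le (right_ne_zero_of_mul hN) (left_ne_zero_of_mul hN)

/-- Numbers `M` with `t M ≤ 1 / 9` (see `IsT.witness_le`), enough to have a divisor of each
`N ≥ 26` without prime factors `≥ 17`. The primes `17`, `19`, `23` occur as divisors of the small
cofactors in `exists_witness`. -/
def witnesses : List ℕ :=
  [17, 19, 23, 22, 25, 26, 27, 28, 30, 32, 33, 35, 36, 39, 40, 42, 45, 48, 49, 55, 63, 65, 77, 91,
    121, 143, 169]

lemma exists_witness (N : ℕ) (hN : 26 ≤ N) :
    (∃ p, p.Prime ∧ 17 ≤ p ∧ p ∣ N) ∨ ∃ M ∈ witnesses, M ∣ N := by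
  induction N using Nat.strong_induction_on with
  | _ N ih =>
  obtain ⟨p, hp, m, rfl⟩ := Nat.exists_prime_and_dvd (show N ≠ 1 by omega)
  by_cases hp17 : 17 ≤ p
  · exact Or.inl ⟨p, hp, hp17, dvd_mul_right p m⟩
  by_cases hm : 26 ≤ m
  · rcases ih m (by nlinarith [hp.two_le]) hm with ⟨q, hq, hq17, hqm⟩ | ⟨M, hM, hMm⟩
    · exact Or.inl ⟨q, hq, hq17, hqm.mul_left p⟩
    · exact Or.inr ⟨M, hM, hMm.mul_left p⟩
  · right
    have key : ∀ p < 17, ∀ m < 26, p ∈ [2, 3, 5, 7, 11, 13] → 26 ≤ p * m →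
        ∃ M ∈ witnesses, M ∣ p * m := by decide +kernel
    refine key p (by omega) m (by omega) ?_ hN
    have hlt : p < 17 := by omega
    interval_cases p <;> first | decide | (exfalso; revert hp; norm_num)

lemma IsT.prime_le (h : IsT t) {p : ℕ} (hp : p.Prime) (h17 : 17 ≤ p) : t p ≤ 1 / 9 := by
  have : (17 : ℝ) ≤ p := by exact_mod_cast h17
  rw [h.map_prime hp, div_le_div_iff₀ (by positivity) (by norm_num)]
  linarith

lemma IsT.witness_le (h : IsT t) {M : ℕ} (hM : M ∈ witnesses) : t M ≤ 1 / 9 := by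
  have h2 := h.map_pow 2 1 (by norm_num)
  have h4 := h.map_pow 2 2 (by norm_num)
  have h8 := h.map_pow 2 3 (by norm_num)
  have h16 := h.map_pow 2 4 (by norm_num)
  have h32 := h.map_pow 2 5 (by norm_num)
  have h3 := h.map_pow 3 1 (by norm_num)
  have h9 := h.map_pow 3 2 (by norm_num)
  have h27 := h.map_pow 3 3 (by norm_num)
  have h5 := h.map_pow 5 1 (by norm_num)
  have h25 := h.map_pow 5 2 (by norm_num)
  have h7 := h.map_pow 7 1 (by norm_num)
  have h49 := h.map_pow 7 2 (by norm_num)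
  have h11 := h.map_pow 11 1 (by norm_num)
  have h121 := h.map_pow 11 2 (by norm_num)
  have h13 := h.map_pow 13 1 (by norm_num)
  have h169 := h.map_pow 13 2 (by norm_num)
  have h17 := h.map_pow 17 1 (by norm_num)
  have h19 := h.map_pow 19 1 (by norm_num)
  have h23 := h.map_pow 23 1 (by norm_num)
  norm_num at h2 h4 h8 h16 h32 h3 h9 h27 h5 h25 h7 h49 h11 h121 h13 h169 h17 h19 h23
  simp only [witnesses, List.mem_cons, List.not_mem_nil, or_false] at hM
  rcases hM with rfl | rfl | rfl | rfl | rfl | rfl | rfl | rfl | rfl | rfl | rfl | rfl | rfl |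
    rfl | rfl | rfl | rfl | rfl | rfl | rfl | rfl | rfl | rfl | rfl | rfl | rfl | rfl
  · norm_num [h17]
  · norm_num [h19]
  · norm_num [h23]
  · rw [show 22 = 2 * 11 from rfl, h.map_mul _ _ (by norm_num), h2, h11]
    norm_num
  · norm_num [h25]
  · rw [show 26 = 2 * 13 from rfl, h.map_mul _ _ (by norm_num), h2, h13]
    norm_num
  · norm_num [h27]
  · rw [show 28 = 4 * 7 from rfl, h.map_mul _ _ (by norm_num), h4, h7]
    norm_num
  · rw [show 30 = 2 * (3 * 5) from rfl, h.map_mul _ _ (by norm_num),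
      h.map_mul _ _ (by norm_num), h2, h3, h5]
    norm_num
  · norm_num [h32]
  · rw [show 33 = 3 * 11 from rfl, h.map_mul _ _ (by norm_num), h3, h11]
    norm_num
  · rw [show 35 = 5 * 7 from rfl, h.map_mul _ _ (by norm_num), h5, h7]
    norm_num
  · rw [show 36 = 4 * 9 from rfl, h.map_mul _ _ (by norm_num), h4, h9]
    norm_num
  · rw [show 39 = 3 * 13 from rfl, h.map_mul _ _ (by norm_num), h3, h13]
    norm_num
  · rw [show 40 = 8 * 5 from rfl, h.map_mul _ _ (by norm_num), h8, h5]
    norm_num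
  · rw [show 42 = 2 * (3 * 7) from rfl, h.map_mul _ _ (by norm_num),
      h.map_mul _ _ (by norm_num), h2, h3, h7]
    norm_num
  · rw [show 45 = 9 * 5 from rfl, h.map_mul _ _ (by norm_num), h9, h5]
    norm_num
  · rw [show 48 = 16 * 3 from rfl, h.map_mul _ _ (by norm_num), h16, h3]
    norm_num
  · norm_num [h49]
  · rw [show 55 = 5 * 11 from rfl, h.map_mul _ _ (by norm_num), h5, h11]
    norm_num
  · rw [show 63 = 9 * 7 from rfl, h.map_mul _ _ (by norm_num), h9, h7]
    norm_num
  · rw [show 65 = 5 * 13 from rfl, h.map_mul _ _ (by norm_num), h5, h13]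
    norm_num
  · rw [show 77 = 7 * 11 from rfl, h.map_mul _ _ (by norm_num), h7, h11]
    norm_num
  · rw [show 91 = 7 * 13 from rfl, h.map_mul _ _ (by norm_num), h7, h13]
    norm_num
  · norm_num [h121]
  · rw [show 143 = 11 * 13 from rfl, h.map_mul _ _ (by norm_num), h11, h13]
    norm_num
  · norm_num [h169]

end TBound

/-- Let `s, u : ℕ → ℝ` be the multiplicative arithmetic functions
determined by `s (p^n) = 1 - 1/p²` and `u (p^n) = p^(n-2) (p-1) ((n+1)p - (n-1))`
for every prime `p` and `n ≥ 1`.  For every integer `N ≥ 26` one has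
`t(N) = u(N)/(s(N) N²) ≤ 1/9`; equivalently `1 - 6 u(N)/(s(N) N²) ≥ 1/3`. -/
theorem t_le_one_ninth
    (s u : ℕ → ℝ)
    (hs1 : s 1 = 1) (hu1 : u 1 = 1)
    (hsmul : ∀ m n : ℕ, Nat.Coprime m n → s (m * n) = s m * s n)
    (humul : ∀ m n : ℕ, Nat.Coprime m n → u (m * n) = u m * u n)
    (hsp : ∀ p n : ℕ, p.Prime → 1 ≤ n → s (p ^ n) = 1 - 1 / (p : ℝ) ^ 2)
    (hup : ∀ p n : ℕ, p.Prime → 1 ≤ n →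
      u (p ^ n) = (p : ℝ) ^ ((n : ℤ) - 2) * ((p : ℝ) - 1) *
        (((n : ℝ) + 1) * (p : ℝ) - ((n : ℝ) - 1)))
    (N : ℕ) (hN : 26 ≤ N) :
    u N / (s N * (N : ℝ) ^ 2) ≤ 1 / 9 ∧
      1 - 6 * u N / (s N * (N : ℝ) ^ 2) ≥ 1 / 3 := by
  have hT : TBound.IsT (fun N => u N / (s N * (N : ℝ) ^ 2)) := by
    constructor
    · intro m n hmn
      rw [hsmul m n hmn, humul m n hmn, div_mul_div_comm]
      push_cast
      congr 1
      ring
    · intro p n hp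
      have h1 : (1 : ℝ) < p := by exact_mod_cast hp.one_lt
      have hp0 : (p : ℝ) ≠ 0 := by positivity
      have hp1 : (p : ℝ) + 1 ≠ 0 := by positivity
      have hp2 : (p : ℝ) - 1 ≠ 0 := by linarith
      rcases Nat.eq_zero_or_pos n with rfl | hn
      · simp only [pow_zero, hs1, hu1]
        push_cast
        field_simp
        ring
      · have hs : s (p ^ n) = ((p : ℝ) - 1) * (p + 1) / (p : ℝ) ^ 2 := by
          rw [hsp p n hp hn]
          field_simp
          ring
        rw [hs, hup p n hp hn, zpow_sub₀ hp0, zpow_natCast]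
        push_cast
        norm_cast
        push_cast
        field_simp
  have key : u N / (s N * (N : ℝ) ^ 2) ≤ 1 / 9 := by
    rcases TBound.exists_witness N hN with ⟨p, hp, h17, hpN⟩ | ⟨M, hM, hMN⟩
    · exact (hT.le_of_dvd (by omega) hpN).trans (hT.prime_le hp h17)
    · exact (hT.le_of_dvd (by omega) hMN).trans (hT.witness_le hM)
  refine ⟨key, ?_⟩
  rw [mul_div_assoc]
  linarith
end

section
/- Define T(x,y) = ((y+1)x − (y−1)) / (x^y (x+1)) for real numbers x, y ≥ 2. Then T is weakly decreasing in each variable on [2,∞) × [2,∞): for all real numbers 2 ≤ x ≤ x' and 2 ≤ y ≤ y', one has T(x', y) ≤ T(x, y) and T(x, y') ≤ T(x, y). -/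
/-!
Write `N(x,y) = (y+1)x - (y-1) = (x-1)y + (x+1)`, the numerator of `T`.

In `x`: factor `x^y = x^(y-2) * x^2`. Since `x^(y-2)` is increasing, it suffices that the rational
function `N(x,y) / (x^2 (x+1))` is decreasing in `x`, a polynomial inequality (`poly_ineq`) whose
difference of sides has only nonnegative coefficients in `x-2`, `x'-x` and `y-2`.

In `y`: with `d = y'-y` the claim is `N(x,y) + d(x-1) ≤ x^d N(x,y)`. It follows from
`x^d ≥ 1 + d log x ≥ 1 + d/2` (`rpow_lower`) and `2(x-1) ≤ N(x,y)`.
-/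

/-- The auxiliary real two-variable function
`T(x,y) = ((y+1)x - (y-1)) / (x^y (x+1))` (real power `x^y`). -/
noncomputable def T (x y : ℝ) : ℝ := ((y + 1) * x - (y - 1)) / (x ^ y * (x + 1))

lemma poly_ineq (x x' y : ℝ) (hx : 2 ≤ x) (hxx' : x ≤ x') (hy : 2 ≤ y) :
    ((y + 1) * x' - (y - 1)) * (x ^ 2 * (x + 1)) ≤
      ((y + 1) * x - (y - 1)) * (x' ^ 2 * (x' + 1)) := by
  obtain ⟨a, ha, rfl⟩ : ∃ a, 0 ≤ a ∧ x = 2 + a := ⟨x - 2, by linarith, by ring⟩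
  obtain ⟨h, hh, rfl⟩ : ∃ h, 0 ≤ h ∧ x' = 2 + a + h := ⟨x' - (2 + a), by linarith, by ring⟩
  obtain ⟨b, hb, rfl⟩ : ∃ b, 0 ≤ b ∧ y = 2 + b := ⟨y - 2, by linarith, by ring⟩
  rw [← sub_nonneg]
  ring_nf
  positivity

lemma rpow_lower (x d : ℝ) (hx : 2 ≤ x) (hd : 0 ≤ d) : 1 + d / 2 ≤ x ^ d := by
  have hlog : 1 / 2 ≤ Real.log x := by
    have h1 := Real.one_sub_inv_le_log_of_pos (show 0 < x by linarith)
    have h2 : x⁻¹ ≤ 2⁻¹ := inv_anti₀ (by norm_num) hx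
    linarith
  rw [Real.rpow_def_of_pos (by linarith)]
  have h3 := Real.add_one_le_exp (Real.log x * d)
  nlinarith

/-- `T` is weakly decreasing in each variable on `[2,∞) × [2,∞)`:
for all reals `2 ≤ x ≤ x'` and `2 ≤ y ≤ y'` one has `T x' y ≤ T x y` and
`T x y' ≤ T x y`. -/
theorem T_antitone (x x' y y' : ℝ) (hx : 2 ≤ x) (hxx' : x ≤ x')
    (hy : 2 ≤ y) (hyy' : y ≤ y') :
    T x' y ≤ T x y ∧ T x y' ≤ T x y := by
  have hx0 : 0 < x := by linarith
  have hx'0 : 0 < x' := by linarith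
  have hN : 2 * (x - 1) ≤ (y + 1) * x - (y - 1) := by nlinarith
  unfold T
  constructor
  · rw [div_le_div_iff₀ (by positivity) (by positivity)]
    have split : ∀ z : ℝ, 0 < z → z ^ y = z ^ (y - 2) * z ^ 2 := fun z hz => by
      rw [← Real.rpow_natCast z 2, ← Real.rpow_add hz]
      norm_num
    have hmono : x ^ (y - 2) ≤ x' ^ (y - 2) :=
      Real.rpow_le_rpow hx0.le hxx' (by linarith)
    have hN0 : 0 ≤ (y + 1) * x - (y - 1) := by linarith
    rw [split x hx0, split x' hx'0]
    calc ((y + 1) * x' - (y - 1)) * (x ^ (y - 2) * x ^ 2 * (x + 1))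
        = x ^ (y - 2) * (((y + 1) * x' - (y - 1)) * (x ^ 2 * (x + 1))) := by ring
      _ ≤ x ^ (y - 2) * (((y + 1) * x - (y - 1)) * (x' ^ 2 * (x' + 1))) :=
          mul_le_mul_of_nonneg_left (poly_ineq x x' y hx hxx' hy) (by positivity)
      _ ≤ x' ^ (y - 2) * (((y + 1) * x - (y - 1)) * (x' ^ 2 * (x' + 1))) := by
          gcongr
      _ = ((y + 1) * x - (y - 1)) * (x' ^ (y - 2) * x' ^ 2 * (x' + 1)) := by ring
  · rw [div_le_div_iff₀ (by positivity) (by positivity)]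
    have hsplit : x ^ y' = x ^ y * x ^ (y' - y) := by
      rw [← Real.rpow_add hx0]
      ring_nf
    have hd : 0 ≤ y' - y := by linarith
    have key : (y' + 1) * x - (y' - 1) ≤ ((y + 1) * x - (y - 1)) * x ^ (y' - y) :=
      calc (y' + 1) * x - (y' - 1)
          = ((y + 1) * x - (y - 1)) + (y' - y) / 2 * (2 * (x - 1)) := by ring
        _ ≤ ((y + 1) * x - (y - 1)) + (y' - y) / 2 * ((y + 1) * x - (y - 1)) := by gcongr
        _ = ((y + 1) * x - (y - 1)) * (1 + (y' - y) / 2) := by ring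
        _ ≤ ((y + 1) * x - (y - 1)) * x ^ (y' - y) :=
            mul_le_mul_of_nonneg_left (rpow_lower x _ hx hd) (by linarith)
    rw [hsplit]
    calc ((y' + 1) * x - (y' - 1)) * (x ^ y * (x + 1))
        ≤ ((y + 1) * x - (y - 1)) * x ^ (y' - y) * (x ^ y * (x + 1)) := by gcongr
      _ = ((y + 1) * x - (y - 1)) * (x ^ y * x ^ (y' - y) * (x + 1)) := by ring
end

section
/- The limit superior, as the positive integer N tends to infinity, of g₁(N)/N² equals 1/24. -/
/-!
The upper bound follows from `0 ≤ s N ≤ 1` and `0 ≤ u N` for `N ≥ 1`, which hold on prime powers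
and propagate by multiplicativity: they give `g₁(N)/N² ≤ 1/24 + 1/N²`. The bound is attained in the
limit along the primes, where `s p = 1 - 1/p²` and `u p = 2(p - 1)` yield
`g₁(p)/p² ≥ 1/24 - 1/(2p)`.
-/

open Real Filter

/-- A property of real numbers that is closed under multiplication and holds for the values of a
multiplicative function at prime powers holds for all its values at positive integers. -/
theorem multiplicative_values_induction (f : ℕ → ℝ) (P : ℝ → Prop)
    (h1 : P (f 1)) (hmul : ∀ m n : ℕ, Nat.Coprime m n → f (m * n) = f m * f n)
    (hP : ∀ x y, P x → P y → P (x * y))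
    (hp : ∀ p n : ℕ, p.Prime → 1 ≤ n → P (f (p ^ n))) (N : ℕ) (hN : 1 ≤ N) : P (f N) := by
  induction N using Nat.recOnPosPrimePosCoprime with
  | prime_pow p n hpp hn => exact hp p n hpp hn
  | zero => omega
  | one => exact h1
  | coprime a b ha hb hab iha ihb =>
    rw [hmul a b hab]
    exact hP _ _ (iha (by omega)) (ihb (by omega))

/-- Let `s, u : ℕ → ℝ` be the multiplicative arithmetic functions
determined by `s (p^n) = 1 - 1/p²` and `u (p^n) = p^(n-2) (p-1) ((n+1)p - (n-1))`
for every prime `p` and `n ≥ 1`, and set `g₁(N) = (1/24) s(N) N² - (1/4) u(N) + 1`.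
Then `limsup_{N → ∞} g₁(N)/N² = 1/24`. -/
theorem limsup_g1_div_sq
    (s u : ℕ → ℝ)
    (hs1 : s 1 = 1) (hu1 : u 1 = 1)
    (hsmul : ∀ m n : ℕ, Nat.Coprime m n → s (m * n) = s m * s n)
    (humul : ∀ m n : ℕ, Nat.Coprime m n → u (m * n) = u m * u n)
    (hsp : ∀ p n : ℕ, p.Prime → 1 ≤ n → s (p ^ n) = 1 - 1 / (p : ℝ) ^ 2)
    (hup : ∀ p n : ℕ, p.Prime → 1 ≤ n →
      u (p ^ n) = (p : ℝ) ^ ((n : ℤ) - 2) * ((p : ℝ) - 1) *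
        (((n : ℝ) + 1) * (p : ℝ) - ((n : ℝ) - 1))) :
    limsup (fun N : ℕ =>
        ((1 / 24) * s N * (N : ℝ) ^ 2 - (1 / 4) * u N + 1) / (N : ℝ) ^ 2) atTop
      = 1 / 24 := by
  have hs : ∀ N : ℕ, 1 ≤ N → 0 ≤ s N ∧ s N ≤ 1 := by
    refine multiplicative_values_induction s (fun x => 0 ≤ x ∧ x ≤ 1) (by simp [hs1]) hsmul ?_ ?_
    · rintro x y ⟨hx0, hx1⟩ ⟨hy0, hy1⟩
      exact ⟨mul_nonneg hx0 hy0, mul_le_one₀ hx1 hy0 hy1⟩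
    · intro p n hp hn
      have h2 : (1 : ℝ) ≤ p := by exact_mod_cast hp.one_lt.le
      rw [hsp p n hp hn]
      have h3 : 1 / (p : ℝ) ^ 2 ≤ 1 := by
        rw [div_le_one (by positivity)]
        exact one_le_pow₀ h2
      have h4 : 0 ≤ 1 / (p : ℝ) ^ 2 := by positivity
      constructor <;> linarith
  have hu : ∀ N : ℕ, 1 ≤ N → 0 ≤ u N := by
    refine multiplicative_values_induction u (fun x => 0 ≤ x) (by simp [hu1]) humul
      (fun x y => mul_nonneg) ?_
    intro p n hp hn
    have h2 : (1 : ℝ) ≤ p := by exact_mod_cast hp.one_lt.le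
    rw [hup p n hp hn]
    have h3 : (0 : ℝ) ≤ n := n.cast_nonneg
    exact mul_nonneg (mul_nonneg (by positivity) (by linarith)) (by nlinarith)
  have hupper : ∀ ε : ℝ, 0 < ε → ∀ᶠ N : ℕ in atTop,
      ((1 / 24) * s N * (N : ℝ) ^ 2 - (1 / 4) * u N + 1) / (N : ℝ) ^ 2 ≤ 1 / 24 + ε := by
    intro ε hε
    filter_upwards [tendsto_one_div_atTop_nhds_zero_nat.eventually_lt_const hε,
      eventually_ge_atTop 1] with N hN h1
    have hNr : (1 : ℝ) ≤ N := by exact_mod_cast h1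
    have hpos : (0 : ℝ) < N := by linarith
    rw [div_lt_iff₀ hpos] at hN
    rw [div_le_iff₀ (by positivity)]
    have h2 : s N * (N : ℝ) ^ 2 ≤ 1 * (N : ℝ) ^ 2 :=
      mul_le_mul_of_nonneg_right (hs N h1).2 (by positivity)
    have h3 : ε * N * 1 ≤ ε * N * N := mul_le_mul_of_nonneg_left hNr (by positivity)
    nlinarith [hu N h1]
  have hlower : ∀ ε : ℝ, 0 < ε → ∃ᶠ N : ℕ in atTop,
      1 / 24 - ε ≤ ((1 / 24) * s N * (N : ℝ) ^ 2 - (1 / 4) * u N + 1) / (N : ℝ) ^ 2 := by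
    intro ε hε
    have hprimes : ∃ᶠ p : ℕ in atTop, p.Prime :=
      Nat.frequently_atTop_iff_infinite.mpr Nat.infinite_setOfPred_prime
    refine (hprimes.and_eventually
      (tendsto_one_div_atTop_nhds_zero_nat.eventually_lt_const hε)).mono ?_
    rintro p ⟨hp, hpε⟩
    have hpos : (0 : ℝ) < p := by exact_mod_cast hp.pos
    have hsv : s p = 1 - 1 / (p : ℝ) ^ 2 := by simpa using hsp p 1 hp le_rfl
    have huv : u p = 2 * ((p : ℝ) - 1) := by
      have h := hup p 1 hp le_rfl
      rw [pow_one, show ((1 : ℕ) : ℤ) - 2 = -1 by norm_num, zpow_neg_one] at h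
      rw [h]
      field_simp
      push_cast
      ring
    rw [div_lt_iff₀ hpos] at hpε
    rw [le_div_iff₀ (by positivity), hsv, huv]
    have h2 : 1 / 24 * (1 - 1 / (p : ℝ) ^ 2) * (p : ℝ) ^ 2 = 1 / 24 * ((p : ℝ) ^ 2 - 1) := by
      field_simp
    rw [h2]
    nlinarith [mul_lt_mul_of_pos_right hpε hpos]
  have hbdd : IsBoundedUnder (· ≤ ·) atTop (fun N : ℕ =>
      ((1 / 24) * s N * (N : ℝ) ^ 2 - (1 / 4) * u N + 1) / (N : ℝ) ^ 2) :=
    isBoundedUnder_of_eventually_le (hupper 1 one_pos)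
  have hcobdd : IsCoboundedUnder (· ≤ ·) atTop (fun N : ℕ =>
      ((1 / 24) * s N * (N : ℝ) ^ 2 - (1 / 4) * u N + 1) / (N : ℝ) ^ 2) :=
    IsCoboundedUnder.of_frequently_ge (hlower 1 one_pos)
  apply le_antisymm
  · exact le_of_forall_pos_le_add fun ε hε => limsup_le_of_le hcobdd (hupper ε hε)
  · refine le_of_forall_pos_le_add fun ε hε => ?_
    linarith [le_limsup_of_frequently_le (hlower ε hε) hbdd]
end

section
/- Let n ≥ 1 be an integer and let G be a finite subgroup of the abelian group ℂˣ × ℤ/nℤ. Suppose G is isomorphic to ℤ/Nℤ × ℤ/N′ℤ for positive integers N, N′ such that at every prime p the p-adic valuations satisfy |v_p(N) − v_p(N′)| ≤ 1. Then G splits: there exist elements P, P′ ∈ G such that (1) G is generated by P and P′, (2) the image of P under the projection ℂˣ × ℤ/nℤ → ℤ/nℤ has order equal to the order of P, and (3) P′ lies in the subgroup ℂˣ × {0}. -/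
/-!
Let `K` be the kernel and `Q` the image of the projection `G → ℤ/nℤ`. Both are cyclic: `K` embeds
into `ℂˣ` as a finite subgroup, and `Q` is a subgroup of `ℤ/nℤ`. Write `m = |K|` and `q = |Q|`.
The group splits as soon as a generator of `Q` lifts to an element `P` with `P ^ q = 1`, since
such a `P` together with a generator `P'` of `K` does the job.
Starting from any lift `P₀`, the element `P₀ ^ q` lies in `K`, and one can correct `P₀` by an
element of `K` precisely when `P₀ ^ q` is a `q`-th power in `K`, i.e. (as `K` is cyclic of order
`m`) when `P₀ ^ (q * (m / gcd m q)) = P₀ ^ lcm m q = 1`. So it suffices that the exponent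
`lcm N N'` of `G` divides `lcm m q` (`exists_splitting_of_exponent_dvd`).
Since `m * q = |G| = N * N'`, at each prime `max (v m) (v q)` is at least half of `v N + v N'`,
and rounding up gives `max (v N) (v N')` because these two valuations differ by at most one
(`lcm_dvd_lcm_of_mul_eq`).
-/

/-- If `a` and `b` have valuations differing by at most one at every prime, then `lcm a b` is the smallest,
for divisibility, among the `lcm m q` with `m * q = a * b`. -/
lemma lcm_dvd_lcm_of_mul_eq {a b m q : ℕ} (ha : 0 < a) (hb : 0 < b) (h : m * q = a * b)
    (hval : ∀ p : ℕ, p.Prime →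
      ((a.factorization p : ℤ) - (b.factorization p : ℤ)).natAbs ≤ 1) :
    Nat.lcm a b ∣ Nat.lcm m q := by
  have hab : m * q ≠ 0 := by rw [h]; positivity
  have hm : m ≠ 0 := left_ne_zero_of_mul hab
  have hq : q ≠ 0 := right_ne_zero_of_mul hab
  rw [← Nat.factorization_prime_le_iff_dvd (Nat.lcm_ne_zero ha.ne' hb.ne') (Nat.lcm_ne_zero hm hq)]
  intro p hp
  have h1 := congrArg (fun x => x.factorization p) h
  simp only [Nat.factorization_mul hm hq, Nat.factorization_mul ha.ne' hb.ne',
    Finsupp.add_apply] at h1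
  have h2 := hval p hp
  rw [Nat.factorization_lcm ha.ne' hb.ne', Nat.factorization_lcm hm hq]
  simp only [Finsupp.sup_apply]
  omega

/-- A finite abelian extension of a cyclic group by a cyclic group, whose exponent divides the
least common multiple of the orders of the two, is split: a generator of the quotient lifts to an
element `P` of the same order. -/
lemma exists_splitting_of_exponent_dvd {G H : Type*} [CommGroup G] [Finite G] [Group H]
    (f : G →* H) (hK : IsCyclic f.ker) (hQ : IsCyclic f.range)
    (hexp : Monoid.exponent G ∣ Nat.lcm (Nat.card f.ker) (Nat.card f.range)) :
    ∃ P P' : G, Subgroup.closure {P, P'} = ⊤ ∧ orderOf (f P) = orderOf P ∧ f P' = 1 := by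
  obtain ⟨⟨c, hc⟩, hcgen⟩ := hK.exists_generator
  obtain ⟨⟨_, P₀, rfl⟩, hQgen⟩ := hQ.exists_generator
  have hm : orderOf c = Nat.card f.ker := by
    rw [← orderOf_eq_card_of_forall_mem_zpowers hcgen, Subgroup.orderOf_mk]
  have hq : orderOf (f P₀) = Nat.card f.range := by
    rw [← orderOf_eq_card_of_forall_mem_zpowers hQgen]
    exact (Subgroup.orderOf_mk (f P₀) (MonoidHom.mem_range.2 ⟨P₀, rfl⟩)).symm
  have hKer : ∀ g : G, f g = 1 → ∃ j : ℤ, c ^ j = g := by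
    intro g hg
    obtain ⟨j, hj⟩ := Subgroup.mem_zpowers_iff.1 (hcgen ⟨g, hg⟩)
    exact ⟨j, congrArg Subtype.val hj⟩
  rw [← hm, ← hq] at hexp
  set m := orderOf c with hmdef
  set q := orderOf (f P₀) with hqdef
  have hmpos : 0 < m := orderOf_pos c
  have hfc : f c = 1 := hc
  obtain ⟨j, hj⟩ := hKer (P₀ ^ q) (by rw [map_pow, pow_orderOf_eq_one])
  have hgj : ((Nat.gcd m q : ℕ) : ℤ) ∣ j := by
    have hgpos : 0 < Nat.gcd m q := Nat.gcd_pos_of_pos_left _ hmpos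
    obtain ⟨s, hs⟩ := Nat.gcd_dvd_left m q
    have hspos : 0 < s := Nat.pos_of_ne_zero (by rintro rfl; simp at hs; omega)
    have hlcm : Nat.lcm m q = q * s := by
      have h1 := Nat.gcd_mul_lcm m q
      have h2 : m * q = Nat.gcd m q * (q * s) := by
        conv_lhs => rw [hs]
        ring
      exact Nat.eq_of_mul_eq_mul_left hgpos (h1.trans h2)
    have h1 : P₀ ^ Nat.lcm m q = 1 :=
      orderOf_dvd_iff_pow_eq_one.1 ((Monoid.order_dvd_exponent P₀).trans hexp)
    rw [hlcm, pow_mul, ← hj, ← zpow_natCast, ← zpow_mul] at h1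
    have h2 : (m : ℤ) ∣ j * s := orderOf_dvd_iff_zpow_eq_one.2 h1
    rw [hs, Nat.cast_mul] at h2
    exact Int.dvd_of_mul_dvd_mul_right (by exact_mod_cast hspos.ne') h2
  -- Bézout: `j = q * x + m * y`, so `P₀ ^ q = c ^ j` is the `q`-th power of `c ^ x`.
  obtain ⟨x, hx⟩ : ∃ x : ℤ, c ^ j = c ^ (x * q) := by
    obtain ⟨t, rfl⟩ := hgj
    refine ⟨Nat.gcdB m q * t, ?_⟩
    rw [Nat.gcd_eq_gcd_ab, show ((m : ℤ) * Nat.gcdA m q + q * Nat.gcdB m q) * t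
      = m * (Nat.gcdA m q * t) + Nat.gcdB m q * t * q by ring, zpow_add, zpow_mul,
      zpow_natCast, pow_orderOf_eq_one, one_zpow, one_mul]
  have hfP : f (P₀ * (c ^ x)⁻¹) = f P₀ := by simp [hfc]
  refine ⟨P₀ * (c ^ x)⁻¹, c, ?_, ?_, hfc⟩
  · rw [eq_top_iff]
    intro g _
    obtain ⟨i, hi⟩ := Subgroup.mem_zpowers_iff.1 (hQgen ⟨f g, g, rfl⟩)
    have hi' : f P₀ ^ i = f g := congrArg Subtype.val hi
    obtain ⟨l, hl⟩ := hKer (g * ((P₀ * (c ^ x)⁻¹) ^ i)⁻¹)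
      (by rw [map_mul, map_inv, map_zpow, hfP, hi', mul_inv_cancel])
    rw [show g = c ^ l * (P₀ * (c ^ x)⁻¹) ^ i by rw [hl, inv_mul_cancel_right]]
    exact mul_mem (zpow_mem (Subgroup.subset_closure (by simp)) _)
      (zpow_mem (Subgroup.subset_closure (by simp)) _)
  · apply Nat.dvd_antisymm (orderOf_map_dvd f _)
    rw [hfP, orderOf_dvd_iff_pow_eq_one, mul_pow, ← hj, hx, zpow_mul, zpow_natCast, inv_pow,
      mul_inv_cancel]

/-- Let `n ≥ 1` and let `G` be a finite subgroup of
`ℂˣ × ℤ/nℤ` (the latter factor written multiplicatively).  Suppose `G` is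
isomorphic to `ℤ/Nℤ × ℤ/N'ℤ` with `|v_p(N) - v_p(N')| ≤ 1` at every prime `p`.
Then `G` splits: there are `P, P' ∈ G` generating `G` such that the image of
`P` in `ℤ/nℤ` has order equal to the order of `P`, and `P'` lies in
`ℂˣ × {0}`. -/
theorem subgroup_splits
    (n : ℕ) (hn : 1 ≤ n)
    (G : Subgroup (ℂˣ × Multiplicative (ZMod n)))
    (hfin : Finite G)
    (N N' : ℕ) (hN : 0 < N) (hN' : 0 < N')
    (hiso : Nonempty (G ≃* (Multiplicative (ZMod N) × Multiplicative (ZMod N'))))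
    (hval : ∀ p : ℕ, p.Prime →
      ((N.factorization p : ℤ) - (N'.factorization p : ℤ)).natAbs ≤ 1) :
    ∃ P P' : ℂˣ × Multiplicative (ZMod n),
      P ∈ G ∧ P' ∈ G ∧
      Subgroup.closure {P, P'} = G ∧
      orderOf P.2 = orderOf P ∧
      P'.2 = 1 := by
  have : NeZero n := ⟨by omega⟩
  have : NeZero N := ⟨hN.ne'⟩
  have : NeZero N' := ⟨hN'.ne'⟩
  obtain ⟨e⟩ := hiso
  let f : G →* Multiplicative (ZMod n) := (MonoidHom.snd _ _).comp G.subtype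
  have hK : IsCyclic f.ker := by
    refine isCyclic_of_injective_ringHom
      ((Units.coeHom ℂ).comp ((MonoidHom.fst _ _).comp (G.subtype.comp f.ker.subtype))) ?_
    rintro ⟨⟨⟨a, b⟩, hab⟩, h⟩ ⟨⟨⟨a', b'⟩, hab'⟩, h'⟩ heq
    have hb : b = 1 := h
    have hb' : b' = 1 := h'
    have ha : a = a' := Units.ext heq
    subst hb hb' ha
    rfl
  have hcard : Nat.card f.ker * Nat.card f.range = N * N' := by
    rw [← Nat.card_congr (QuotientGroup.quotientKerEquivRange f).toEquiv, mul_comm,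
      ← Subgroup.card_eq_card_quotient_mul_card_subgroup, Nat.card_congr e.toEquiv, Nat.card_prod]
    simp
  have hexp : Monoid.exponent G ∣ Nat.lcm (Nat.card f.ker) (Nat.card f.range) := by
    refine dvd_trans ?_ (lcm_dvd_lcm_of_mul_eq hN hN' hcard hval)
    rw [Monoid.exponent_eq_of_mulEquiv e, Monoid.exponent_prod]
    apply lcm_dvd_lcm
    · exact Group.exponent_dvd_nat_card.trans (by simp)
    · exact Group.exponent_dvd_nat_card.trans (by simp)
  obtain ⟨P, P', hgen, hord, hP'⟩ := exists_splitting_of_exponent_dvd f hK inferInstance hexp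
  refine ⟨P, P', P.2, P'.2, ?_, ?_, hP'⟩
  · have h := congrArg (Subgroup.map G.subtype) hgen
    rw [MonoidHom.map_closure, Set.image_pair, ← MonoidHom.range_eq_map,
      Subgroup.range_subtype] at h
    exact h
  · rw [Subgroup.orderOf_coe]
    exact hord
end
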